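/- Let S ≥ 1/2 be a half-integer and G = (V,E,w) a finite undirected graph with nonnegative edge weights. Then (S/(S+1))² · QMaxCut_S(G) ≤ Prod(G) ≤ QMaxCut_S(G), where Prod(G) = max over assignments of unit vectors Ω_i ∈ S² ⊂ ℝ³ to the vertices of (1/2) Σ_{{i,j}∈E} w_ij (1 − Ω_i·Ω_j). -/

import Mathlib

open Matrix MeasureTheory Filter
open scoped BigOperators RealInnerProductSpace Kronecker

noncomputable section

/-- The spin value `S = n/2` for a half-integer spin encoded by `n : ℕ` (`n ≥ 1` means `S ≥ 1/2`). -/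
def spinVal (n : ℕ) : ℝ := (n : ℝ) / 2

/-- The raising operator `S⁺` on `ℂ^(n+1)` in the basis `|m⟩`, `m = k − n/2`, `k = 0, …, n`:
`S⁺|m⟩ = √(S(S+1) − m(m+1)) |m+1⟩`. -/
def spinP (n : ℕ) : Matrix (Fin (n+1)) (Fin (n+1)) ℂ :=
  fun j k => if (j : ℕ) = (k : ℕ) + 1
    then (Real.sqrt (spinVal n * (spinVal n + 1)
      - ((k : ℝ) - spinVal n) * (((k : ℝ) - spinVal n) + 1)) : ℂ)
    else 0

/-- The standard spin-`S` matrices `Ŝ¹, Ŝ², Ŝ³` on `ℂ^(n+1)`, where `S = n/2`: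
`Ŝ¹ = (S⁺ + S⁻)/2`, `Ŝ² = (S⁺ − S⁻)/(2i)`, `Ŝ³|m⟩ = m|m⟩`, with `S⁻ = (S⁺)ᴴ`. -/
def spinMat (n : ℕ) : Fin 3 → Matrix (Fin (n+1)) (Fin (n+1)) ℂ :=
  fun α =>
    if α = 0 then (1/2 : ℂ) • (spinP n + (spinP n)ᴴ)
    else if α = 1 then (1/(2*Complex.I) : ℂ) • (spinP n - (spinP n)ᴴ)
    else Matrix.diagonal (fun k => (((k : ℝ) - spinVal n : ℝ) : ℂ))

/-- The operator `A` acting on tensor factor `i` of `(ℂ^(n+1))^{⊗V}` and as the identity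
elsewhere, realized as a matrix indexed by configurations `V → Fin (n+1)`. -/
def siteOp {V : Type*} [Fintype V] [DecidableEq V] (n : ℕ) (i : V)
    (A : Matrix (Fin (n+1)) (Fin (n+1)) ℂ) :
    Matrix (V → Fin (n+1)) (V → Fin (n+1)) ℂ :=
  fun x y => if ∀ j, j ≠ i → x j = y j then A (x i) (y i) else 0

/-- The Heisenberg coupling `Σ_{α=1}^3 Ŝ^α_i Ŝ^α_j` between sites `i` and `j`. -/
def heis {V : Type*} [Fintype V] [DecidableEq V] (n : ℕ) (i j : V) :
    Matrix (V → Fin (n+1)) (V → Fin (n+1)) ℂ :=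
  ∑ α : Fin 3, siteOp n i (spinMat n α) * siteOp n j (spinMat n α)

/-- The largest eigenvalue of a complex matrix (as a real number). -/
def maxEig {m : Type*} [Fintype m] (A : Matrix m m ℂ) : ℝ :=
  sSup {r : ℝ | ∃ v : m → ℂ, v ≠ 0 ∧ A.mulVec v = (r : ℂ) • v}

/-- The smallest eigenvalue of a complex matrix (as a real number). -/
def minEig {m : Type*} [Fintype m] (A : Matrix m m ℂ) : ℝ :=
  sInf {r : ℝ | ∃ v : m → ℂ, v ≠ 0 ∧ A.mulVec v = (r : ℂ) • v}

/-- The spin-`S` Quantum Max-Cut Hamiltonian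
`Ĥ_QMC = (1/2) Σ_{{i,j}∈E} w_ij (𝟙 − (1/S²) Σ_α Ŝ^α_i Ŝ^α_j)`, written as a sum over
ordered pairs of vertices (each unordered edge counted twice, whence the factor `1/4`). -/
def hQMC {V : Type*} [Fintype V] [DecidableEq V] (n : ℕ) (w : V → V → ℝ) :
    Matrix (V → Fin (n+1)) (V → Fin (n+1)) ℂ :=
  (1/4 : ℂ) • ∑ i, ∑ j, (w i j : ℂ) •
    ((1 : Matrix (V → Fin (n+1)) (V → Fin (n+1)) ℂ)
      - ((1/(spinVal n)^2 : ℝ) : ℂ) • heis n i j)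

/-- The value `QMaxCut_S(G)`: the largest eigenvalue of `Ĥ_QMC`. -/
def qMaxCut {V : Type*} [Fintype V] [DecidableEq V] (n : ℕ) (w : V → V → ℝ) : ℝ :=
  maxEig (hQMC n w)

/-- The classical cut energy `(1/2) Σ_{{i,j}∈E} w_ij (1 − u_i·u_j)`, written as a sum over
ordered pairs of vertices (each unordered edge counted twice, whence the factor `1/4`). -/
def cutEnergy {V : Type*} [Fintype V] (w : V → V → ℝ)
    (u : V → EuclideanSpace ℝ (Fin 3)) : ℝ :=
  (1/4) * ∑ i, ∑ j, w i j * (1 - ⟪u i, u j⟫)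

/-- The product-state value `Prod(G)`: the maximum of the cut energy over assignments of
unit vectors in `ℝ³` to the vertices. -/
def prodVal {V : Type*} [Fintype V] (w : V → V → ℝ) : ℝ :=
  sSup {x : ℝ | ∃ Ω : V → EuclideanSpace ℝ (Fin 3), (∀ i, ‖Ω i‖ = 1) ∧ x = cutEnergy w Ω}

/-- The classical Heisenberg energy `(1/2) Σ_{{i,j}∈E} w_ij Ω_i·Ω_j`. -/
def chaEnergy {V : Type*} [Fintype V] (w : V → V → ℝ)
    (Ω : V → EuclideanSpace ℝ (Fin 3)) : ℝ :=
  (1/4) * ∑ i, ∑ j, w i j * ⟪Ω i, Ω j⟫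

/-- The value `CHA(G)` of the classical Heisenberg antiferromagnet. -/
def chaVal {V : Type*} [Fintype V] (w : V → V → ℝ) : ℝ :=
  sInf {x : ℝ | ∃ Ω : V → EuclideanSpace ℝ (Fin 3), (∀ i, ‖Ω i‖ = 1) ∧ x = chaEnergy w Ω}

/-!
The coherent state of spin `S` pointing in the direction `Ω ∈ S²` is `|Ω⟩ = |Ω, 1/2⟩^{⊗2S}`. A spin
matrix has two classical symbols: `⟨Ω|Ŝ^α|Ω⟩ = S Ω^α`, and `Ŝ^α = (S + 1) ∫ Ω^α dP(Ω)` where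
`dP(Ω) = (2S + 1) |Ω⟩⟨Ω| dΩ` resolves the identity.

The first symbol makes the energy of the product state `⨂ |Ω_i⟩` equal to the cut energy of `Ω`,
whence `Prod ≤ QMaxCut`. By the second, `Ĥ_QMC` is the average against the resolution of the
identity `⨂ dP(Ω_i)` of the function `(1/2) Σ w_ij (1 - ((S + 1)/S)² Ω_i·Ω_j)`, so it is bounded by
the maximum of that function (the Berezin–Lieb argument). Since `(S + 1)/S ≥ 1` and `w ≥ 0`, this
is at most `((S + 1)/S)²` times the cut energy.
-/

section Eigenvalues

variable {m : Type*} [Fintype m]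

lemma mem_spectrum_real_iff [DecidableEq m] (A : Matrix m m ℂ) (r : ℝ) :
    r ∈ spectrum ℝ A ↔ ∃ v : m → ℂ, v ≠ 0 ∧ A *ᵥ v = (r : ℂ) • v := by
  have hscalar : algebraMap ℝ (Matrix m m ℂ) r = (r : ℂ) • 1 := by
    rw [Algebra.algebraMap_eq_smul_one, Complex.coe_smul]
  rw [spectrum.mem_iff, isUnit_iff_isUnit_det, isUnit_iff_ne_zero, not_not,
    ← exists_mulVec_eq_zero_iff, hscalar]
  simp only [sub_mulVec, smul_mulVec, one_mulVec, sub_eq_zero, eq_comm]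

open scoped MatrixOrder ComplexOrder

lemma maxEig_le_iff [DecidableEq m] [Nonempty m] {A : Matrix m m ℂ} (hA : A.IsHermitian) (c : ℝ) :
    maxEig A ≤ c ↔ A ≤ algebraMap ℝ (Matrix m m ℂ) c := by
  have hset : maxEig A = sSup (spectrum ℝ A) :=
    congrArg sSup (Set.ext fun r => (mem_spectrum_real_iff A r).symm)
  have hspec := hA.spectrum_real_eq_range_eigenvalues
  rw [le_algebraMap_iff_spectrum_le hA.isSelfAdjoint, hset, hspec]
  exact csSup_le_iff (Set.finite_range _).bddAbove (Set.range_nonempty _)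

/-- The expectation value `⟨v, A v⟩` of the observable `A` in the state `v`, linear in `A`. -/
def expectation (v : m → ℂ) : Matrix m m ℂ →ₗ[ℂ] ℂ where
  toFun A := star v ⬝ᵥ A *ᵥ v
  map_add' A B := by rw [add_mulVec, dotProduct_add]
  map_smul' c A := by rw [smul_mulVec, dotProduct_smul, RingHom.id_apply]

lemma expectation_apply (v : m → ℂ) (A : Matrix m m ℂ) : expectation v A = star v ⬝ᵥ A *ᵥ v := rfl

lemma expectation_conjTranspose (v : m → ℂ) (A : Matrix m m ℂ) :
    expectation v Aᴴ = star (expectation v A) := by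
  rw [expectation_apply, expectation_apply, star_dotProduct, star_mulVec,
    conjTranspose_conjTranspose, dotProduct_mulVec]

lemma expectation_le_maxEig [DecidableEq m] [Nonempty m] {A : Matrix m m ℂ} (hA : A.IsHermitian)
    {v : m → ℂ} (hv : expectation v 1 = 1) : expectation v A ≤ maxEig A := by
  have hpos : (algebraMap ℝ (Matrix m m ℂ) (maxEig A) - A).PosSemidef :=
    Matrix.le_iff.mp ((maxEig_le_iff hA _).mp le_rfl)
  have hnonneg : 0 ≤ expectation v (algebraMap ℝ (Matrix m m ℂ) (maxEig A) - A) :=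
    hpos.dotProduct_mulVec_nonneg v
  rwa [map_sub, Algebra.algebraMap_eq_smul_one, ← Complex.coe_smul, map_smul, hv, smul_eq_mul,
    mul_one, sub_nonneg] at hnonneg

end Eigenvalues

section TensorProducts

variable {V m R : Type*} [Fintype V] [CommSemiring R]

/-- The tensor product `⨂ₖ Nₖ` of a family of matrices indexed by the sites `k ∈ V`, as a matrix
indexed by configurations `V → m`. -/
def tensorMatrix (N : V → Matrix m m R) : Matrix (V → m) (V → m) R :=
  Matrix.of fun x y => ∏ k, N k (x k) (y k)

/-- The product vector `⨂ₖ ψₖ`, as a function of configurations `V → m`. -/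
def tensorVec (ψ : V → m → R) : (V → m) → R := fun x => ∏ k, ψ k (x k)

lemma tensorMatrix_mul [DecidableEq V] [Fintype m] (N N' : V → Matrix m m R) :
    tensorMatrix (N * N') = tensorMatrix N * tensorMatrix N' := by
  ext x y
  simp only [tensorMatrix, of_apply, Matrix.mul_apply, Pi.mul_apply, Fintype.prod_sum,
    Finset.prod_mul_distrib]

lemma tensorMatrix_one [DecidableEq m] :
    tensorMatrix (1 : V → Matrix m m R) = 1 := by
  ext x y
  simp only [tensorMatrix, of_apply, Pi.one_apply, Matrix.one_apply, Fintype.prod_ite_zero,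
    Finset.prod_const_one, funext_iff]

lemma tensorMatrix_mulVec [DecidableEq V] [Fintype m] (N : V → Matrix m m R) (ψ : V → m → R) :
    tensorMatrix N *ᵥ tensorVec ψ = tensorVec fun k => N k *ᵥ ψ k := by
  ext x
  simp only [tensorMatrix, tensorVec, mulVec, dotProduct, of_apply, Fintype.prod_sum,
    Finset.prod_mul_distrib]

lemma tensorVec_dotProduct [DecidableEq V] [Fintype m] (φ ψ : V → m → R) :
    tensorVec φ ⬝ᵥ tensorVec ψ = ∏ k, φ k ⬝ᵥ ψ k := by
  simp only [tensorVec, dotProduct, Fintype.prod_sum, Finset.prod_mul_distrib]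

lemma expectation_tensorVec [DecidableEq V] [Fintype m] (ψ : V → m → ℂ) (N : V → Matrix m m ℂ) :
    expectation (tensorVec ψ) (tensorMatrix N) = ∏ k, expectation (ψ k) (N k) := by
  have hstar : star (tensorVec ψ) = tensorVec fun k => star (ψ k) := by
    ext x
    simp only [tensorVec, Pi.star_apply, star_prod]
  simp only [expectation_apply, hstar, tensorMatrix_mulVec, tensorVec_dotProduct]

lemma siteOp_eq_tensorMatrix [DecidableEq V] (n : ℕ) (i : V)
    (A : Matrix (Fin (n + 1)) (Fin (n + 1)) ℂ) :
    siteOp n i A = tensorMatrix (Pi.mulSingle i A) := by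
  ext x y
  have hrest : ∏ k ∈ Finset.univ.erase i, (Pi.mulSingle i A : V → Matrix _ _ ℂ) k (x k) (y k)
      = ∏ k ∈ Finset.univ.erase i, if x k = y k then 1 else 0 :=
    Finset.prod_congr rfl fun k hk => by
      rw [Pi.mulSingle_eq_of_ne (Finset.ne_of_mem_erase hk), Matrix.one_apply]
  rw [tensorMatrix, of_apply, ← Finset.mul_prod_erase _ _ (Finset.mem_univ i), hrest,
    Finset.prod_ite_zero]
  simp [siteOp]

lemma siteOp_mul_siteOp [DecidableEq V] (n : ℕ) (i j : V)
    (A B : Matrix (Fin (n + 1)) (Fin (n + 1)) ℂ) :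
    siteOp n i A * siteOp n j B = tensorMatrix (Pi.mulSingle i A * Pi.mulSingle j B) := by
  rw [siteOp_eq_tensorMatrix, siteOp_eq_tensorMatrix, tensorMatrix_mul]

lemma apply_mulSingle_mul_mulSingle {ι M N : Type*} [DecidableEq ι] [MulOneClass M]
    [MulOneClass N] (F : ι → M → N) (hF : ∀ k, F k 1 = 1) {i j : ι} (hij : i ≠ j) (x y : M)
    (k : ι) :
    F k ((Pi.mulSingle i x * Pi.mulSingle j y : ι → M) k)
      = (Pi.mulSingle i (F i x) * Pi.mulSingle j (F j y) : ι → N) k := by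
  rcases eq_or_ne k i with rfl | hki
  · simp [hij]
  · rcases eq_or_ne k j with rfl | hkj <;> simp [*]

lemma prod_apply_mulSingle_mul_mulSingle {M N : Type*} [DecidableEq V] [MulOneClass M]
    [CommMonoid N] (F : V → M → N) (hF : ∀ k, F k 1 = 1) {i j : V} (hij : i ≠ j) (x y : M) :
    ∏ k, F k ((Pi.mulSingle i x * Pi.mulSingle j y : V → M) k) = F i x * F j y := by
  rw [Finset.prod_congr rfl fun k _ => apply_mulSingle_mul_mulSingle F hF hij x y k]
  simp only [Pi.mul_apply, Finset.prod_mul_distrib, Finset.prod_pi_mulSingle', Finset.mem_univ,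
    if_true]

lemma expectation_siteOp_mul_siteOp [DecidableEq V] {n : ℕ} {ψ : V → Fin (n + 1) → ℂ}
    (hψ : ∀ k, expectation (ψ k) 1 = 1) {i j : V} (hij : i ≠ j)
    (A B : Matrix (Fin (n + 1)) (Fin (n + 1)) ℂ) :
    expectation (tensorVec ψ) (siteOp n i A * siteOp n j B)
      = expectation (ψ i) A * expectation (ψ j) B := by
  rw [siteOp_mul_siteOp, expectation_tensorVec]
  exact prod_apply_mulSingle_mul_mulSingle (fun k => expectation (ψ k)) hψ hij A B

end TensorProducts

section Toeplitz

lemma integrable_of_compactSpace {A E : Type*} [TopologicalSpace A] [CompactSpace A]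
    [MeasurableSpace A] [OpensMeasurableSpace A] [NormedAddCommGroup E] {μ : Measure A}
    [IsFiniteMeasureOnCompacts μ] {f : A → E} (hf : Continuous f) : Integrable f μ :=
  hf.integrable_of_hasCompactSupport (HasCompactSupport.of_compactSpace f)

variable {A m : Type*} [TopologicalSpace A] [CompactSpace A] [MeasureSpace A]
  [OpensMeasurableSpace A] [IsFiniteMeasure (volume : Measure A)]

/-- The operator `∫ f(a) |ψ(a)⟩⟨ψ(a)| da` with upper (Berezin–Toeplitz) symbol `f` with respect to a
continuous family `ψ` of vectors, linear in `f`. The matrix-valued integral is taken entrywise. -/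
def toeplitz (ψ : C(A, m → ℂ)) : C(A, ℂ) →ₗ[ℂ] Matrix m m ℂ where
  toFun f := Matrix.of fun x y => ∫ a, f a * (ψ a x * star (ψ a y))
  map_add' f g := by
    ext x y
    simp only [of_apply, Matrix.add_apply, ContinuousMap.add_apply, add_mul]
    exact integral_add (integrable_of_compactSpace (by fun_prop))
      (integrable_of_compactSpace (by fun_prop))
  map_smul' c f := by
    ext x y
    simp only [of_apply, Matrix.smul_apply, ContinuousMap.smul_apply, smul_eq_mul, mul_assoc,
      RingHom.id_apply, integral_const_mul]

lemma toeplitz_apply (ψ : C(A, m → ℂ)) (f : C(A, ℂ)) (x y : m) :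
    toeplitz ψ f x y = ∫ a, f a * (ψ a x * star (ψ a y)) := rfl

lemma toeplitz_star (ψ : C(A, m → ℂ)) (f : C(A, ℂ)) :
    toeplitz ψ (star f) = (toeplitz ψ f)ᴴ := by
  ext x y
  rw [conjTranspose_apply, toeplitz_apply, toeplitz_apply, Complex.star_def, ← integral_conj]
  congr with a
  simp only [ContinuousMap.star_apply, ← Complex.star_def, star_mul', star_star]
  ring

lemma expectation_toeplitz [Fintype m] (ψ : C(A, m → ℂ)) (f : C(A, ℂ)) (v : m → ℂ) :
    expectation v (toeplitz ψ f) = ∫ a, f a * (star (ψ a) ⬝ᵥ v * star (star (ψ a) ⬝ᵥ v)) := by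
  have hint : ∀ x y, Integrable fun a => star (v x) * (f a * (ψ a x * star (ψ a y)) * v y) :=
    fun x y => integrable_of_compactSpace (by fun_prop)
  calc expectation v (toeplitz ψ f)
      = ∑ x, ∑ y, ∫ a, star (v x) * (f a * (ψ a x * star (ψ a y)) * v y) := by
        simp only [expectation_apply, dotProduct, mulVec, Pi.star_apply, toeplitz_apply,
          integral_const_mul, integral_mul_const, Finset.mul_sum]
    _ = ∫ a, ∑ x, ∑ y, star (v x) * (f a * (ψ a x * star (ψ a y)) * v y) := by
        rw [integral_finsetSum _ fun x _ => integrable_finsetSum _ fun y _ => hint x y]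
        simp only [integral_finsetSum _ fun y _ => hint _ y]
    _ = _ := by
        congr with a
        simp only [dotProduct, star_sum, star_mul', Pi.star_apply, star_star]
        rw [mul_comm (∑ y, _), Finset.sum_mul_sum]
        simp only [Finset.mul_sum]
        refine Finset.sum_congr rfl fun x _ => Finset.sum_congr rfl fun y _ => ?_
        ring

open scoped MatrixOrder ComplexOrder

lemma posSemidef_toeplitz [Finite m] (ψ : C(A, m → ℂ)) {f : C(A, ℂ)} (hf : ∀ a, 0 ≤ f a) :
    (toeplitz ψ f).PosSemidef := by
  cases nonempty_fintype m
  have hstar : star f = f := ContinuousMap.ext fun a => (IsSelfAdjoint.of_nonneg (hf a)).star_eq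
  refine posSemidef_iff_dotProduct_mulVec.mpr ⟨?_, fun v => ?_⟩
  · rw [Matrix.IsHermitian, ← toeplitz_star, hstar]
  · rw [← expectation_apply, expectation_toeplitz]
    exact integral_nonneg fun a => mul_nonneg (hf a) (mul_star_self_nonneg _)

lemma toeplitz_le_algebraMap [Fintype m] [DecidableEq m] {ψ : C(A, m → ℂ)}
    (hψ : toeplitz ψ 1 = 1) {f : C(A, ℂ)} {c : ℝ} (hf : ∀ a, f a ≤ c) :
    toeplitz ψ f ≤ algebraMap ℝ (Matrix m m ℂ) c := by
  have hdiff : algebraMap ℝ (Matrix m m ℂ) c - toeplitz ψ f = toeplitz ψ ((c : ℂ) • 1 - f) := by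
    rw [map_sub, map_smul, hψ, Algebra.algebraMap_eq_smul_one, Complex.coe_smul]
  rw [Matrix.le_iff, hdiff]
  exact posSemidef_toeplitz ψ fun a => by simpa using hf a

variable {V : Type*} [Fintype V]

/-- The family of product vectors `⨂ₖ ψ(aₖ)`, indexed by `a : V → A`. -/
def tensorFamily (ψ : C(A, m → ℂ)) : C(V → A, (V → m) → ℂ) :=
  ⟨fun a => tensorVec fun k => ψ (a k), by unfold tensorVec; fun_prop⟩

variable [OpensMeasurableSpace (V → A)]

lemma toeplitz_tensorFamily (ψ : C(A, m → ℂ)) (f : V → C(A, ℂ)) :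
    toeplitz (tensorFamily ψ) (∏ k, (f k).comp (ContinuousMap.eval k))
      = tensorMatrix fun k => toeplitz ψ (f k) := by
  ext x y
  simp only [tensorMatrix, of_apply, toeplitz_apply, ← integral_fintype_prod_volume_eq_prod]
  simp [tensorFamily, tensorVec, Finset.prod_mul_distrib]

lemma toeplitz_tensorFamily_one [DecidableEq m] {ψ : C(A, m → ℂ)} (hψ : toeplitz ψ 1 = 1) :
    toeplitz (tensorFamily ψ : C(V → A, (V → m) → ℂ)) 1 = 1 := by
  have h := toeplitz_tensorFamily (V := V) ψ 1
  simpa [hψ, ContinuousMap.one_comp, ← Pi.one_def, tensorMatrix_one] using h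

lemma siteOp_toeplitz_mul_siteOp_toeplitz [DecidableEq V] {n : ℕ} {ψ : C(A, Fin (n + 1) → ℂ)}
    (hψ : toeplitz ψ 1 = 1) {i j : V} (hij : i ≠ j) (f g : C(A, ℂ)) :
    siteOp n i (toeplitz ψ f) * siteOp n j (toeplitz ψ g)
      = toeplitz (tensorFamily ψ)
          (f.comp (ContinuousMap.eval i) * g.comp (ContinuousMap.eval j)) := by
  rw [← prod_apply_mulSingle_mul_mulSingle (fun k (h : C(A, ℂ)) => h.comp (ContinuousMap.eval k))
      (fun k => ContinuousMap.one_comp _) hij, toeplitz_tensorFamily, siteOp_mul_siteOp]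
  congr 1 with k : 1
  exact (apply_mulSingle_mul_mulSingle (fun _ => toeplitz ψ) (fun _ => hψ) hij f g k).symm

end Toeplitz

section BlochSphere

/-- Cylindrical coordinates on the unit sphere: the point `(t, θ)` has height `2t - 1` and
longitude `2πθ`. By Archimedes' hat-box theorem the product measure is the uniform probability
measure of the sphere. -/
abbrev CylCoord := unitInterval × UnitAddCircle

/-- The spin-up amplitude of the spin-1/2 state pointing in a given direction; together with
`spinDown` it parametrizes the sphere as the Bloch sphere. The phase is put into `spinDown`. -/
def spinUp : C(CylCoord, ℂ) := ⟨fun x => (√(x.1 : ℝ) : ℂ), by fun_prop⟩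

/-- The spin-down amplitude of the spin-1/2 state pointing in a given direction. -/
def spinDown : C(CylCoord, ℂ) := ⟨fun x => (√(1 - x.1 : ℝ) : ℂ) * fourier 1 x.2, by fun_prop⟩

lemma star_spinUp (x : CylCoord) : star (spinUp x) = spinUp x := Complex.conj_ofReal _

lemma star_spinUp_mul_spinUp (x : CylCoord) : star (spinUp x) * spinUp x = ((x.1 : ℝ) : ℂ) := by
  rw [star_spinUp, spinUp, ContinuousMap.coe_mk]
  exact_mod_cast Real.mul_self_sqrt x.1.2.1

lemma star_spinDown_mul_spinDown (x : CylCoord) :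
    star (spinDown x) * spinDown x = 1 - ((x.1 : ℝ) : ℂ) := by
  have hsqrt : (√(1 - x.1 : ℝ) : ℂ) * (√(1 - x.1 : ℝ) : ℂ) = 1 - ((x.1 : ℝ) : ℂ) := by
    exact_mod_cast Real.mul_self_sqrt (sub_nonneg.mpr x.1.2.2)
  have hphase : star (fourier 1 x.2) * fourier 1 x.2 = (1 : ℂ) := by
    rw [Complex.star_def, ← fourier_neg, ← fourier_add, neg_add_cancel, fourier_zero]
  calc star (spinDown x) * spinDown x
      = ((√(1 - x.1 : ℝ) : ℂ) * (√(1 - x.1 : ℝ) : ℂ)) * (star (fourier 1 x.2) * fourier 1 x.2) := by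
        rw [spinDown, ContinuousMap.coe_mk, star_mul', Complex.star_def, Complex.conj_ofReal]
        ring
    _ = _ := by rw [hsqrt, hphase, mul_one]

lemma star_spinUp_mul_spinUp_add_star_spinDown_mul_spinDown (x : CylCoord) :
    star (spinUp x) * spinUp x + star (spinDown x) * spinDown x = 1 := by
  rw [star_spinUp_mul_spinUp, star_spinDown_mul_spinDown, add_sub_cancel]

/-- The symbol `2 conj(spinUp) spinDown = x + iy` of the raising operator, where `x` and `y` are the
equatorial Cartesian coordinates on the sphere. -/
def ladderSymbol : C(CylCoord, ℂ) := (2 : ℂ) • (star spinUp * spinDown)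

lemma ladderSymbol_apply (x : CylCoord) :
    ladderSymbol x = (2 * (√(x.1 : ℝ) * √(1 - x.1 : ℝ)) : ℝ) * fourier 1 x.2 := by
  simp only [ladderSymbol, ContinuousMap.smul_apply, ContinuousMap.mul_apply,
    ContinuousMap.star_apply, star_spinUp, smul_eq_mul]
  simp only [spinUp, spinDown, ContinuousMap.coe_mk]
  push_cast
  ring

/-- The point of the unit sphere with given cylindrical coordinates: the Bloch vector of the
spin-1/2 state `(spinUp, spinDown)`. -/
def blochVector (x : CylCoord) : EuclideanSpace ℝ (Fin 3) :=
  !₂[(ladderSymbol x).re, (ladderSymbol x).im, 2 * x.1 - 1]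

lemma norm_blochVector (x : CylCoord) : ‖blochVector x‖ = 1 := by
  have hladder : Complex.normSq (ladderSymbol x) = 4 * x.1 * (1 - x.1) := by
    rw [ladderSymbol_apply, Complex.normSq_mul, Complex.normSq_ofReal,
      Complex.normSq_eq_norm_sq (fourier 1 x.2), fourier_apply, Circle.norm_coe]
    linear_combination 4 * (√(1 - x.1 : ℝ)) ^ 2 * Real.sq_sqrt x.1.2.1
      + 4 * (x.1 : ℝ) * Real.sq_sqrt (sub_nonneg.mpr x.1.2.2)
  rw [← sq_eq_sq₀ (norm_nonneg _) zero_le_one, EuclideanSpace.real_norm_sq_eq, Fin.sum_univ_three]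
  simp only [blochVector, PiLp.toLp_apply, cons_val]
  rw [Complex.normSq_apply] at hladder
  linear_combination hladder

lemma exists_blochVector_eq {u : EuclideanSpace ℝ (Fin 3)} (hu : ‖u‖ = 1) :
    ∃ x, blochVector x = u := by
  have hsum : u 0 ^ 2 + u 1 ^ 2 + u 2 ^ 2 = 1 := by
    rw [← Fin.sum_univ_three (fun i => u i ^ 2), ← EuclideanSpace.real_norm_sq_eq, hu, one_pow]
  have hheight : (1 + u 2) / 2 ∈ unitInterval :=
    ⟨by nlinarith [sq_nonneg (u 0), sq_nonneg (u 1)],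
      by nlinarith [sq_nonneg (u 0), sq_nonneg (u 1)]⟩
  let w : ℂ := ⟨u 0, u 1⟩
  have hnorm : 2 * (√((1 + u 2) / 2) * √(1 - (1 + u 2) / 2)) = ‖w‖ := by
    rw [← Real.sqrt_mul hheight.1, Complex.norm_def, ← Real.sqrt_sq zero_le_two,
      ← Real.sqrt_mul (sq_nonneg _), Complex.normSq_mk]
    congr 1
    linear_combination -hsum
  let x : CylCoord := (⟨(1 + u 2) / 2, hheight⟩, ((w.arg / (2 * Real.pi) : ℝ) : UnitAddCircle))
  have hladder : ladderSymbol x = w := by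
    have hphase : 2 * Real.pi * Complex.I * (1 : ℤ) * (w.arg / (2 * Real.pi) : ℝ) / (1 : ℝ)
        = w.arg * Complex.I := by
      have hpi : (Real.pi : ℂ) ≠ 0 := Complex.ofReal_ne_zero.mpr Real.pi_ne_zero
      push_cast
      field_simp
    rw [ladderSymbol_apply, hnorm, fourier_coe_apply, hphase, Complex.norm_mul_exp_arg_mul_I]
  refine ⟨x, PiLp.ext fun i => ?_⟩
  fin_cases i
  · exact congrArg Complex.re hladder
  · exact congrArg Complex.im hladder
  · change 2 * ((1 + u 2) / 2) - 1 = u 2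
    ring

/-- The Cartesian coordinate functions on the sphere, as complex-valued symbols. -/
def blochCoord (α : Fin 3) : C(CylCoord, ℂ) :=
  ![(1 / 2 : ℂ) • (ladderSymbol + star ladderSymbol),
    (1 / (2 * Complex.I) : ℂ) • (ladderSymbol - star ladderSymbol),
    (2 : ℂ) • (spinUp * star spinUp) - 1] α

lemma blochCoord_apply (α : Fin 3) (x : CylCoord) : blochCoord α x = (blochVector x α : ℝ) := by
  fin_cases α
  · change (1 / 2 : ℂ) * (ladderSymbol x + star (ladderSymbol x)) = ((ladderSymbol x).re : ℂ)
    rw [Complex.re_eq_add_conj, Complex.star_def]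
    ring
  · change (1 / (2 * Complex.I) : ℂ) * (ladderSymbol x - star (ladderSymbol x))
      = ((ladderSymbol x).im : ℂ)
    rw [Complex.im_eq_sub_conj, Complex.star_def]
    ring
  · change (2 : ℂ) * (spinUp x * star (spinUp x)) - 1 = ((2 * x.1 - 1 : ℝ) : ℂ)
    rw [mul_comm (spinUp x), star_spinUp_mul_spinUp]
    push_cast
    rfl

end BlochSphere

section Moments

open scoped Nat

lemma integral_fourier (k : ℤ) :
    ∫ θ : UnitAddCircle, (fourier k θ : ℂ) = if k = 0 then 1 else 0 := by
  split_ifs with hk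
  · simp [hk, Measure.real]
  · exact integral_eq_zero_of_add_right_eq_neg (fourier_add_half_inv_index hk one_pos)

lemma fourier_one_pow {T : ℝ} (k : ℕ) (θ : AddCircle T) : (fourier 1 θ : ℂ) ^ k = fourier k θ := by
  induction k with
  | zero => simp
  | succ k ih => rw [pow_succ, ih, ← fourier_add, Nat.cast_succ]

lemma integral_unitInterval_pow_mul_one_sub_pow (p q : ℕ) :
    ∫ t : unitInterval, ((t : ℝ) : ℂ) ^ p * (1 - ((t : ℝ) : ℂ)) ^ q
      = ((p + q + 1) * (p + q).choose p : ℂ)⁻¹ := by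
  have hre : ∀ k : ℕ, 0 < (k + 1 : ℂ).re := fun k => by
    rw [Complex.add_re, Complex.natCast_re, Complex.one_re]
    positivity
  have hbeta := Complex.betaIntegral_eq_Gamma_mul_div (p + 1) (q + 1) (hre p) (hre q)
  rw [show (p + 1 + (q + 1) : ℂ) = (p + q + 1 : ℕ) + 1 by push_cast; ring,
    Complex.Gamma_nat_eq_factorial, Complex.Gamma_nat_eq_factorial,
    Complex.Gamma_nat_eq_factorial] at hbeta
  have hfact : (p ! * q ! / (p + q + 1)! : ℂ) = ((p + q + 1) * (p + q).choose p : ℂ)⁻¹ := by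
    have hchoose : ((p + q).choose p * p ! * q ! : ℂ) = (p + q)! := by
      rw [Nat.choose_symm_add]
      exact_mod_cast Nat.add_choose_mul_factorial_mul_factorial p q
    have hne : ((p + q).choose p : ℂ) ≠ 0 := by
      exact_mod_cast (Nat.choose_pos (Nat.le_add_right p q)).ne'
    rw [Nat.factorial_succ, Nat.cast_mul, ← hchoose]
    push_cast
    have : (p ! : ℂ) ≠ 0 := Nat.cast_ne_zero.mpr p.factorial_ne_zero
    have : (q ! : ℂ) ≠ 0 := Nat.cast_ne_zero.mpr q.factorial_ne_zero
    field_simp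
  rw [← hfact, ← hbeta, Complex.betaIntegral, intervalIntegral.integral_of_le zero_le_one,
    ← integral_Icc_eq_integral_Ioc, ← integral_subtype measurableSet_Icc]
  simp only [add_sub_cancel_right, Complex.cpow_natCast]

lemma integral_spinUp_pow_mul_spinDown_pow {p q r s : ℕ} (h : p + q = r + s) :
    ∫ x : CylCoord, spinUp x ^ p * star (spinUp x) ^ r * (spinDown x ^ q * star (spinDown x) ^ s)
      = if p = r then ((p + q + 1) * (p + q).choose p : ℂ)⁻¹ else 0 := by
  have hsplit : ∀ x : CylCoord,
      spinUp x ^ p * star (spinUp x) ^ r * (spinDown x ^ q * star (spinDown x) ^ s)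
        = ((√(x.1 : ℝ) : ℂ) ^ (p + r) * (√(1 - x.1 : ℝ) : ℂ) ^ (q + s)) * fourier (q + -s) x.2 := by
    intro x
    rw [fourier_add, fourier_neg, ← fourier_one_pow, ← fourier_one_pow, star_spinUp]
    simp only [spinUp, spinDown, ContinuousMap.coe_mk, star_mul', Complex.star_def,
      Complex.conj_ofReal, map_pow]
    ring
  simp only [hsplit]
  rw [Measure.volume_eq_prod, integral_prod_mul (fun t : unitInterval =>
    ((√(t : ℝ) : ℂ) ^ (p + r) * (√(1 - t : ℝ) : ℂ) ^ (q + s))) (fun θ => (fourier (q + -s) θ : ℂ)),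
    integral_fourier]
  rcases eq_or_ne p r with rfl | hpr
  · obtain rfl : q = s := by omega
    have hsqrt : ∀ {u : ℝ}, 0 ≤ u → ∀ k : ℕ, (√u : ℂ) ^ (k + k) = (u : ℂ) ^ k := by
      intro u hu k
      rw [← two_mul, pow_mul, sq]
      exact_mod_cast congrArg (fun y : ℝ => ((y ^ k : ℝ) : ℂ)) (Real.mul_self_sqrt hu)
    rw [if_pos (add_neg_cancel _), if_pos rfl, mul_one, ← integral_unitInterval_pow_mul_one_sub_pow]
    congr with t
    rw [hsqrt t.2.1, hsqrt (sub_nonneg.mpr t.2.2), Complex.ofReal_sub, Complex.ofReal_one]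
  · rw [if_neg hpr, if_neg (by omega), mul_zero]

end Moments

section SpinMatrices

lemma sqrt_choose_mul_self (n k : ℕ) : (√(n.choose k) : ℂ) * (√(n.choose k) : ℂ) = n.choose k := by
  exact_mod_cast Real.mul_self_sqrt (by positivity)

lemma sqrt_choose_ne_zero {n k : ℕ} (hk : k ≤ n) : (√(n.choose k) : ℂ) ≠ 0 := by
  have hpos : (0 : ℝ) < n.choose k := by exact_mod_cast Nat.choose_pos hk
  exact_mod_cast (Real.sqrt_pos.mpr hpos).ne'

lemma spinP_apply_eq_div (n : ℕ) (j k : Fin (n + 1)) :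
    spinP n j k = if (j : ℕ) = k + 1 then j * (√(n.choose j) : ℂ) / √(n.choose k) else 0 := by
  rw [spinP]
  split_ifs with hjk
  · have hchoose : 0 < (n.choose k : ℝ) := by exact_mod_cast Nat.choose_pos k.is_le
    have hrec : (n.choose j * j : ℝ) = n.choose k * (n - k) := by
      rw [hjk, ← Nat.cast_sub k.is_le]
      exact_mod_cast Nat.choose_succ_right_eq n k
    have hentry : spinVal n * (spinVal n + 1) - (k - spinVal n) * (k - spinVal n + 1)
        = j ^ 2 * n.choose j / n.choose k := by
      rw [eq_div_iff hchoose.ne']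
      have hj : (j : ℝ) = k + 1 := by exact_mod_cast hjk
      unfold spinVal
      linear_combination (-(k + 1 : ℝ)) * hrec - (n.choose j : ℝ) * j * hj
    rw [hentry, Real.sqrt_div (by positivity), Real.sqrt_mul (by positivity),
      Real.sqrt_sq (by positivity)]
    push_cast
    rfl
  · rfl

end SpinMatrices

section CoherentStates

/-- The spin-`n/2` coherent state `(spinUp, spinDown)^{⊗n}`, expanded in the basis of symmetric
tensors with `k` factors up, so `k` has magnetic quantum number `m = k - n/2`. -/
def coherentState (n : ℕ) : C(CylCoord, Fin (n + 1) → ℂ) :=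
  ⟨fun x k => (√(n.choose k) : ℂ) * (spinUp x ^ (k : ℕ) * spinDown x ^ (n - k : ℕ)), by fun_prop⟩

/-- The coherent states scaled by `√(n + 1)`, so that they resolve the identity. -/
def coherentFrame (n : ℕ) : C(CylCoord, Fin (n + 1) → ℂ) := (√(n + 1 : ℝ) : ℂ) • coherentState n

lemma toeplitz_coherentFrame_apply (n : ℕ) {p q r s : ℕ} (h : p + q = r + s) (j k : Fin (n + 1)) :
    toeplitz (coherentFrame n)
        (spinUp ^ p * star spinUp ^ r * (spinDown ^ q * star spinDown ^ s)) j k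
      = if j + p = k + r then (n + 1) * (√(n.choose j) * √(n.choose k))
          * (((n + p + q + 1 : ℕ) : ℂ) * (n + p + q).choose (j + p))⁻¹ else 0 := by
  have hn : (√(n + 1 : ℝ) : ℂ) * (√(n + 1 : ℝ) : ℂ) = n + 1 := by
    exact_mod_cast Real.mul_self_sqrt (by positivity)
  have hmoment := integral_spinUp_pow_mul_spinDown_pow
    (p := j + p) (q := n - j + q) (r := k + r) (s := n - k + s) (by omega)
  rw [← Nat.cast_add, ← Nat.cast_add_one, show j + p + (n - j + q) = n + p + q by omega] at hmoment
  rw [← mul_ite_zero, ← hmoment, ← integral_const_mul, toeplitz_apply]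
  congr with x
  simp only [coherentFrame, coherentState, ContinuousMap.smul_apply, ContinuousMap.coe_mk,
    ContinuousMap.mul_apply, ContinuousMap.pow_apply, ContinuousMap.star_apply, Pi.smul_apply,
    smul_eq_mul, star_mul', star_pow, Complex.star_def, Complex.conj_ofReal, ← hn, pow_add]
  ring

lemma toeplitz_coherentFrame_one (n : ℕ) : toeplitz (coherentFrame n) 1 = 1 := by
  ext j k
  have h := toeplitz_coherentFrame_apply n (p := 0) (q := 0) (r := 0) (s := 0) rfl j k
  simp only [pow_zero, mul_one, add_zero, Nat.cast_add_one, Fin.val_inj] at h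
  rw [h, Matrix.one_apply]
  split_ifs with hjk
  · subst hjk
    rw [sqrt_choose_mul_self]
    exact mul_inv_cancel₀ (mul_ne_zero n.cast_add_one_ne_zero
      (Nat.cast_ne_zero.mpr (Nat.choose_pos j.is_le).ne'))
  · rfl

lemma spinP_eq_toeplitz (n : ℕ) :
    spinP n = ((spinVal n + 1 : ℝ) : ℂ) • toeplitz (coherentFrame n) ladderSymbol := by
  ext j k
  have h := toeplitz_coherentFrame_apply n (p := 0) (q := 1) (r := 1) (s := 0) rfl j k
  simp only [pow_zero, pow_one, one_mul, mul_one, add_zero] at h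
  rw [spinP_apply_eq_div, ladderSymbol, map_smul, Matrix.smul_apply, Matrix.smul_apply, h]
  split_ifs with hjk
  · have hrec : ((n + 1) * n.choose k : ℂ) = (n + 1).choose j * j := by
      rw [hjk]
      exact_mod_cast Nat.add_one_mul_choose_eq n k
    have hchoose : ((n + 1).choose j : ℂ) ≠ 0 :=
      Nat.cast_ne_zero.mpr (Nat.choose_pos (by omega)).ne'
    have hn : (n + 1 + 1 : ℂ) ≠ 0 := by exact_mod_cast (n + 1).succ_ne_zero
    have hk := sqrt_choose_ne_zero k.is_le
    rw [← sqrt_choose_mul_self] at hrec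
    simp only [smul_eq_mul, spinVal]
    push_cast
    field_simp
    linear_combination -(√(n.choose j) : ℂ) * (n + 2) * hrec
  · simp

lemma toeplitz_coherentFrame_spinUp_mul_star_spinUp (n : ℕ) :
    toeplitz (coherentFrame n) (spinUp * star spinUp)
      = Matrix.diagonal fun k : Fin (n + 1) => ((k + 1) / (n + 2) : ℂ) := by
  ext j k
  have h := toeplitz_coherentFrame_apply n (p := 1) (q := 0) (r := 1) (s := 0) rfl j k
  simp only [pow_zero, pow_one, mul_one, add_zero, add_left_inj, Fin.val_inj] at h
  rw [h, Matrix.diagonal_apply]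
  split_ifs with hjk
  · subst hjk
    have hrec : ((n + 1) * n.choose j : ℂ) = (n + 1).choose (j + 1) * (j + 1) := by
      exact_mod_cast Nat.add_one_mul_choose_eq n j
    have hchoose : ((n + 1).choose (j + 1) : ℂ) ≠ 0 :=
      Nat.cast_ne_zero.mpr (Nat.choose_pos (by omega)).ne'
    rw [sqrt_choose_mul_self, hrec]
    field_simp
    push_cast
    ring
  · rfl

lemma spinMat_eq_toeplitz (n : ℕ) (α : Fin 3) :
    spinMat n α = ((spinVal n + 1 : ℝ) : ℂ) • toeplitz (coherentFrame n) (blochCoord α) := by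
  have hlower : (spinP n)ᴴ
      = ((spinVal n + 1 : ℝ) : ℂ) • toeplitz (coherentFrame n) (star ladderSymbol) := by
    rw [spinP_eq_toeplitz, conjTranspose_smul, toeplitz_star, Complex.star_def, Complex.conj_ofReal]
  fin_cases α
  · change (1 / 2 : ℂ) • (spinP n + (spinP n)ᴴ) = _ • toeplitz _ ((1 / 2 : ℂ) • (_ + _))
    rw [hlower, spinP_eq_toeplitz, map_smul, map_add, ← smul_add, smul_comm]
  · change (1 / (2 * Complex.I) : ℂ) • (spinP n - (spinP n)ᴴ)
      = _ • toeplitz _ ((1 / (2 * Complex.I) : ℂ) • (_ - _))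
    rw [hlower, spinP_eq_toeplitz, map_smul, map_sub, ← smul_sub, smul_comm]
  · change Matrix.diagonal (fun k : Fin (n + 1) => (((k : ℝ) - spinVal n : ℝ) : ℂ))
      = _ • toeplitz _ ((2 : ℂ) • _ - _)
    rw [map_sub, map_smul, toeplitz_coherentFrame_spinUp_mul_star_spinUp,
      toeplitz_coherentFrame_one, ← Matrix.diagonal_one, ← Matrix.diagonal_smul,
      Matrix.diagonal_sub, ← Matrix.diagonal_smul]
    congr with k
    have hn : (n + 2 : ℂ) ≠ 0 := by exact_mod_cast (n + 1).succ_ne_zero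
    simp only [Pi.smul_apply, smul_eq_mul, spinVal]
    push_cast
    field_simp
    ring

lemma sum_natCast_mul_choose_mul_pow {R : Type*} [CommRing R] (n : ℕ) (x y : R) :
    ∑ k : Fin (n + 1), (k * n.choose k : R) * (x ^ (k - 1 : ℕ) * y ^ (n - k : ℕ))
      = n * (x + y) ^ (n - 1) := by
  cases n with
  | zero => simp
  | succ n =>
    rw [Fin.sum_univ_succ, Nat.add_sub_cancel, add_pow, Finset.sum_range, Finset.mul_sum]
    simp only [Fin.val_zero, Nat.cast_zero, zero_mul, zero_add, Fin.val_succ, Nat.add_sub_cancel,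
      Nat.add_sub_add_right]
    refine Finset.sum_congr rfl fun k _ => ?_
    have hrec : ((n + 1 : ℕ) * n.choose k : R) = (n + 1).choose (k + 1) * (k + 1 : ℕ) := by
      exact_mod_cast congrArg (Nat.cast : ℕ → R) (Nat.add_one_mul_choose_eq n k)
    linear_combination -(x ^ (k : ℕ) * y ^ (n - k : ℕ)) * hrec

lemma natCast_mul_pow {R : Type*} [CommSemiring R] (k : ℕ) (z : R) :
    (k : R) * z ^ k = z * (k * z ^ (k - 1)) := by
  rcases eq_or_ne k 0 with rfl | hk
  · simp
  · rw [← mul_pow_sub_one hk]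
    ring

lemma star_coherentState_mul_coherentState (n : ℕ) (x : CylCoord) (k : Fin (n + 1)) :
    star (coherentState n x k) * coherentState n x k
      = n.choose k * ((star (spinUp x) * spinUp x) ^ (k : ℕ)
        * (star (spinDown x) * spinDown x) ^ (n - k : ℕ)) := by
  simp only [coherentState, ContinuousMap.coe_mk, star_mul', star_pow, Complex.star_def,
    Complex.conj_ofReal, mul_pow, ← sqrt_choose_mul_self]
  ring

lemma expectation_coherentState_one (n : ℕ) (x : CylCoord) :
    expectation (coherentState n x) 1 = 1 := by
  rw [expectation_apply, one_mulVec, dotProduct]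
  simp only [Pi.star_apply, star_coherentState_mul_coherentState]
  rw [← one_pow (M := ℂ) n, ← star_spinUp_mul_spinUp_add_star_spinDown_mul_spinDown x, add_pow,
    Finset.sum_range]
  exact Finset.sum_congr rfl fun k _ => mul_comm _ _

lemma spinP_mulVec_coherentState (n : ℕ) (x : CylCoord) (j : Fin (n + 1)) :
    (spinP n *ᵥ coherentState n x) j = j * √(n.choose j)
      * (spinUp x ^ (j - 1 : ℕ) * spinDown x ^ (n + 1 - j : ℕ)) := by
  simp only [mulVec, dotProduct, spinP_apply_eq_div, ite_mul, zero_mul]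
  cases j using Fin.cases with
  | zero => simp
  | succ i =>
    rw [Finset.sum_eq_single i.castSucc
      (fun k _ hk => if_neg fun h => hk (Fin.ext (by simpa using h.symm))) (by simp),
      if_pos (by simp)]
    have hne := sqrt_choose_ne_zero i.is_lt.le
    simp only [coherentState, ContinuousMap.coe_mk, Fin.val_castSucc, Fin.val_succ,
      Nat.add_sub_cancel, Nat.add_sub_add_right]
    field_simp

lemma expectation_coherentState_spinP (n : ℕ) (x : CylCoord) :
    expectation (coherentState n x) (spinP n) = spinVal n * ladderSymbol x := by
  have hterm : ∀ j : Fin (n + 1), star (coherentState n x j) * (spinP n *ᵥ coherentState n x) j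
      = star (spinUp x) * spinDown x * ((j * n.choose j) *
        ((star (spinUp x) * spinUp x) ^ (j - 1 : ℕ)
          * (star (spinDown x) * spinDown x) ^ (n - j : ℕ))) := by
    intro j
    rw [spinP_mulVec_coherentState, Nat.succ_sub j.is_le, pow_succ, ← sqrt_choose_mul_self]
    have hreal : star (√(n.choose j) : ℂ) = √(n.choose j) := Complex.conj_ofReal _
    simp only [coherentState, ContinuousMap.coe_mk, star_mul', star_pow, hreal, mul_pow]
    linear_combination (√(n.choose j) * √(n.choose j) * spinUp x ^ (j - 1 : ℕ)
      * (star (spinDown x) * spinDown x) ^ (n - j : ℕ) * spinDown x : ℂ)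
      * natCast_mul_pow j (star (spinUp x))
  calc expectation (coherentState n x) (spinP n)
      = ∑ j, star (coherentState n x j) * (spinP n *ᵥ coherentState n x) j := rfl
    _ = star (spinUp x) * spinDown x * n := by
        simp only [hterm, ← Finset.mul_sum, sum_natCast_mul_choose_mul_pow,
          star_spinUp_mul_spinUp_add_star_spinDown_mul_spinDown, one_pow, mul_one]
    _ = spinVal n * ladderSymbol x := by
        simp only [ladderSymbol, ContinuousMap.smul_apply, ContinuousMap.mul_apply,
          ContinuousMap.star_apply, smul_eq_mul, spinVal]
        push_cast
        ring

lemma expectation_coherentState_diagonal_natCast (n : ℕ) (x : CylCoord) :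
    expectation (coherentState n x) (Matrix.diagonal fun k => ((k : ℕ) : ℂ))
      = n * (star (spinUp x) * spinUp x) := by
  have hterm : ∀ k : Fin (n + 1), star (coherentState n x k) * ((k : ℕ) * coherentState n x k)
      = star (spinUp x) * spinUp x * ((k * n.choose k) *
        ((star (spinUp x) * spinUp x) ^ (k - 1 : ℕ)
          * (star (spinDown x) * spinDown x) ^ (n - k : ℕ))) := by
    intro k
    rw [mul_left_comm, star_coherentState_mul_coherentState]
    linear_combination (n.choose k * (star (spinDown x) * spinDown x) ^ (n - k : ℕ) : ℂ)
      * natCast_mul_pow k (star (spinUp x) * spinUp x)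
  rw [expectation_apply, dotProduct]
  simp only [Pi.star_apply, mulVec_diagonal, hterm, ← Finset.mul_sum,
    sum_natCast_mul_choose_mul_pow, star_spinUp_mul_spinUp_add_star_spinDown_mul_spinDown, one_pow,
    mul_one]
  exact mul_comm _ _

lemma expectation_coherentState_spinMat (n : ℕ) (x : CylCoord) (α : Fin 3) :
    expectation (coherentState n x) (spinMat n α) = spinVal n * blochCoord α x := by
  have hlower : expectation (coherentState n x) (spinP n)ᴴ = spinVal n * star (ladderSymbol x) := by
    rw [expectation_conjTranspose, expectation_coherentState_spinP, star_mul', Complex.star_def,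
      Complex.conj_ofReal]
  fin_cases α
  · change expectation _ ((1 / 2 : ℂ) • (spinP n + (spinP n)ᴴ))
      = _ * ((1 / 2 : ℂ) * (ladderSymbol x + star (ladderSymbol x)))
    rw [map_smul, map_add, hlower, expectation_coherentState_spinP, smul_eq_mul]
    ring
  · change expectation _ ((1 / (2 * Complex.I) : ℂ) • (spinP n - (spinP n)ᴴ))
      = _ * ((1 / (2 * Complex.I) : ℂ) * (ladderSymbol x - star (ladderSymbol x)))
    rw [map_smul, map_sub, hlower, expectation_coherentState_spinP, smul_eq_mul]
    ring
  · have hdiag : spinMat n 2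
        = Matrix.diagonal (fun k : Fin (n + 1) => ((k : ℕ) : ℂ)) - (spinVal n : ℂ) • 1 := by
      rw [← Matrix.diagonal_one, ← Matrix.diagonal_smul, Matrix.diagonal_sub]
      change Matrix.diagonal _ = _
      congr with k
      simp
    change expectation _ (spinMat n 2) = _ * (2 * (spinUp x * star (spinUp x)) - 1)
    rw [hdiag, map_sub, map_smul, expectation_coherentState_diagonal_natCast,
      expectation_coherentState_one, smul_eq_mul, spinVal]
    push_cast
    ring

end CoherentStates

section CutEnergy

variable {V : Type*} [Fintype V] {w : V → V → ℝ}

lemma quarter_sum_mul_one_sub_mul_inner_le (hnn : ∀ i j, 0 ≤ w i j) {c : ℝ} (hc : 1 ≤ c)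
    (u : V → EuclideanSpace ℝ (Fin 3)) :
    1 / 4 * ∑ i, ∑ j, w i j * (1 - c * ⟪u i, u j⟫) ≤ c * cutEnergy w u := by
  simp only [cutEnergy, mul_left_comm c, Finset.mul_sum]
  gcongr with i _ j _
  · exact hnn i j
  · linarith

lemma cutEnergy_le_sum (hnn : ∀ i j, 0 ≤ w i j)
    {u : V → EuclideanSpace ℝ (Fin 3)} (hu : ∀ i, ‖u i‖ = 1) :
    cutEnergy w u ≤ 1 / 4 * ∑ i, ∑ j, w i j * 2 := by
  unfold cutEnergy
  gcongr with i _ j _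
  · exact hnn i j
  · have h := neg_le_of_abs_le (abs_real_inner_le_norm (u i) (u j))
    rw [hu, hu, mul_one] at h
    linarith

lemma cutEnergy_le_prodVal (hnn : ∀ i j, 0 ≤ w i j)
    {u : V → EuclideanSpace ℝ (Fin 3)} (hu : ∀ i, ‖u i‖ = 1) : cutEnergy w u ≤ prodVal w := by
  refine le_csSup ⟨1 / 4 * ∑ i, ∑ j, w i j * 2, ?_⟩ ⟨u, hu, rfl⟩
  rintro _ ⟨v, hv, rfl⟩
  exact cutEnergy_le_sum hnn hv

end CutEnergy

section Hamiltonian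

variable {V : Type*}

/-- The function `Ω_i·Ω_j` of a classical spin configuration `Ω : V → S²`, as a complex-valued
symbol. -/
def pairSymbol (i j : V) : C(V → CylCoord, ℂ) :=
  ∑ α, (blochCoord α).comp (ContinuousMap.eval i) * (blochCoord α).comp (ContinuousMap.eval j)

lemma pairSymbol_apply (i j : V) (x : V → CylCoord) :
    pairSymbol i j x = (⟪blochVector (x i), blochVector (x j)⟫ : ℝ) := by
  simp [pairSymbol, blochCoord_apply, PiLp.inner_apply, mul_comm]

variable [Fintype V]

/-- The upper symbol of the Hamiltonian `hQMC n w` with respect to products of coherent states. -/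
def energySymbol (n : ℕ) (w : V → V → ℝ) : C(V → CylCoord, ℂ) :=
  (1 / 4 : ℂ) • ∑ i, ∑ j, (w i j : ℂ) •
    (1 - ((((spinVal n + 1) / spinVal n) ^ 2 : ℝ) : ℂ) • pairSymbol i j)

lemma energySymbol_apply (n : ℕ) (w : V → V → ℝ) (x : V → CylCoord) :
    energySymbol n w x = (1 / 4 * ∑ i, ∑ j, w i j *
      (1 - ((spinVal n + 1) / spinVal n) ^ 2 * ⟪blochVector (x i), blochVector (x j)⟫) : ℝ) := by
  simp [energySymbol, pairSymbol_apply]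

variable [DecidableEq V]

lemma heis_eq_toeplitz (n : ℕ) {i j : V} (hij : i ≠ j) :
    heis n i j = (((spinVal n + 1) ^ 2 : ℝ) : ℂ)
      • toeplitz (tensorFamily (coherentFrame n)) (pairSymbol i j) := by
  have hsite : ∀ (i : V) (c : ℂ) A, siteOp n i (c • A) = c • siteOp n i A := by
    intro i c A
    ext x y
    simp [siteOp]
  simp only [heis, spinMat_eq_toeplitz, hsite, smul_mul_smul_comm, ← sq, ← Complex.ofReal_pow,
    siteOp_toeplitz_mul_siteOp_toeplitz (toeplitz_coherentFrame_one n) hij, ← Finset.smul_sum,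
    ← map_sum, pairSymbol]

lemma hQMC_eq_toeplitz (n : ℕ) {w : V → V → ℝ} (hloop : ∀ i, w i i = 0) :
    hQMC n w = toeplitz (tensorFamily (coherentFrame n)) (energySymbol n w) := by
  simp only [hQMC, energySymbol, map_smul, map_sum, map_sub,
    toeplitz_tensorFamily_one (toeplitz_coherentFrame_one n)]
  congr 1
  refine Finset.sum_congr rfl fun i _ => Finset.sum_congr rfl fun j _ => ?_
  rcases eq_or_ne i j with rfl | hij
  · simp [hloop]
  · rw [heis_eq_toeplitz n hij, smul_smul, ← Complex.ofReal_mul, div_pow, one_div_mul_eq_div]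

lemma isHermitian_hQMC (n : ℕ) {w : V → V → ℝ} (hloop : ∀ i, w i i = 0) :
    (hQMC n w).IsHermitian := by
  have hstar : star (energySymbol n w) = energySymbol n w := by
    ext x
    rw [ContinuousMap.star_apply, energySymbol_apply, Complex.star_def, Complex.conj_ofReal]
  rw [Matrix.IsHermitian, hQMC_eq_toeplitz n hloop, ← toeplitz_star, hstar]

lemma qMaxCut_le {n : ℕ} (hn : 1 ≤ n) {w : V → V → ℝ} (hnn : ∀ i j, 0 ≤ w i j)
    (hloop : ∀ i, w i i = 0) :
    qMaxCut n w ≤ ((spinVal n + 1) / spinVal n) ^ 2 * prodVal w := by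
  have hS : 0 < spinVal n := div_pos (Nat.cast_pos.mpr hn) two_pos
  have hratio : 1 ≤ ((spinVal n + 1) / spinVal n) ^ 2 :=
    one_le_pow₀ ((one_le_div hS).mpr (le_add_of_nonneg_right zero_le_one))
  rw [qMaxCut, maxEig_le_iff (isHermitian_hQMC n hloop), hQMC_eq_toeplitz n hloop]
  refine toeplitz_le_algebraMap
    (toeplitz_tensorFamily_one (toeplitz_coherentFrame_one n)) fun x => ?_
  rw [energySymbol_apply, Complex.real_le_real]
  refine (quarter_sum_mul_one_sub_mul_inner_le hnn hratio fun i => blochVector (x i)).trans ?_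
  gcongr
  exact cutEnergy_le_prodVal hnn fun i => norm_blochVector (x i)

lemma expectation_tensorVec_coherentState_one (n : ℕ) (x : V → CylCoord) :
    expectation (tensorVec fun k => coherentState n (x k)) 1 = 1 := by
  simp only [← tensorMatrix_one, expectation_tensorVec, Pi.one_apply,
    expectation_coherentState_one, Finset.prod_const_one]

lemma expectation_heis (n : ℕ) (x : V → CylCoord) {i j : V} (hij : i ≠ j) :
    expectation (tensorVec fun k => coherentState n (x k)) (heis n i j)
      = (spinVal n : ℂ) ^ 2 * pairSymbol i j x := by
  simp only [heis, map_sum, expectation_siteOp_mul_siteOp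
    (fun k => expectation_coherentState_one n (x k)) hij, expectation_coherentState_spinMat]
  simp only [pairSymbol, ContinuousMap.sum_apply, ContinuousMap.mul_apply, Finset.mul_sum]
  exact Finset.sum_congr rfl fun α _ => by
    rw [mul_mul_mul_comm, ← sq]
    rfl

lemma expectation_hQMC {n : ℕ} (hn : 1 ≤ n) {w : V → V → ℝ} (hloop : ∀ i, w i i = 0)
    (x : V → CylCoord) :
    expectation (tensorVec fun k => coherentState n (x k)) (hQMC n w)
      = (cutEnergy w fun i => blochVector (x i) : ℝ) := by
  have hterm : ∀ i j, (w i j : ℂ) * (1 - ((1 / spinVal n ^ 2 : ℝ) : ℂ)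
      * expectation (tensorVec fun k => coherentState n (x k)) (heis n i j))
      = (w i j * (1 - ⟪blochVector (x i), blochVector (x j)⟫) : ℝ) := by
    intro i j
    rcases eq_or_ne i j with rfl | hij
    · simp [hloop]
    · have hS : (spinVal n : ℂ) ≠ 0 :=
        Complex.ofReal_ne_zero.mpr (div_pos (Nat.cast_pos.mpr hn) two_pos).ne'
      rw [expectation_heis n x hij, pairSymbol_apply]
      push_cast
      field_simp
  simp only [hQMC, map_smul, map_sum, map_sub, smul_eq_mul, expectation_tensorVec_coherentState_one,
    hterm, cutEnergy]
  push_cast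
  rfl

lemma cutEnergy_le_qMaxCut {n : ℕ} (hn : 1 ≤ n) {w : V → V → ℝ} (hloop : ∀ i, w i i = 0)
    {u : V → EuclideanSpace ℝ (Fin 3)} (hu : ∀ i, ‖u i‖ = 1) :
    cutEnergy w u ≤ qMaxCut n w := by
  choose x hx using fun i => exists_blochVector_eq (hu i)
  have h := expectation_le_maxEig (isHermitian_hQMC n hloop)
    (expectation_tensorVec_coherentState_one n x)
  rw [expectation_hQMC hn hloop, Complex.real_le_real] at h
  simpa only [hx, qMaxCut] using h

lemma prodVal_le_qMaxCut {n : ℕ} (hn : 1 ≤ n) {w : V → V → ℝ} (hloop : ∀ i, w i i = 0) :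
    prodVal w ≤ qMaxCut n w := by
  refine csSup_le ⟨_, fun _ => EuclideanSpace.single 0 1, fun _ => by simp, rfl⟩ ?_
  rintro _ ⟨u, hu, rfl⟩
  exact cutEnergy_le_qMaxCut hn hloop hu

end Hamiltonian

/-- For every half-integer `S ≥ 1/2` and every finite undirected graph `G`
with nonnegative edge weights, `(S/(S+1))² · QMaxCut_S(G) ≤ Prod(G) ≤ QMaxCut_S(G)`. -/
theorem prod_approximates_qMaxCut (n : ℕ) (hn : 1 ≤ n) {V : Type*} [Fintype V] [DecidableEq V]
    (w : V → V → ℝ) (hsymm : ∀ i j, w i j = w j i) (hnn : ∀ i j, 0 ≤ w i j)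
    (hloop : ∀ i, w i i = 0) :
    (spinVal n / (spinVal n + 1)) ^ 2 * qMaxCut n w ≤ prodVal w
      ∧ prodVal w ≤ qMaxCut n w := by
  refine ⟨?_, prodVal_le_qMaxCut hn hloop⟩
  have hS : 0 < spinVal n := div_pos (Nat.cast_pos.mpr hn) two_pos
  have hratio : 0 < ((spinVal n + 1) / spinVal n) ^ 2 := by positivity
  rw [← inv_div, inv_pow, inv_mul_le_iff₀ hratio]
  exact qMaxCut_le hn hnn hloop

end
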